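/- Let X = T*E = E × 𝔸¹ for an elliptic curve E over an algebraically closed field k. A coherent sheaf F on X whose support is finite over Spec k and whose pushforward to E under the projection π : E × 𝔸¹ → E is locally free of rank n, when transformed under the Fourier–Mukai functor with kernel the Poincaré line bundle P on E × E^∨ (i.e., F ↦ p_{2,*}(p_1^* F ⊗ P) where p_1 : T*E × E^∨ → T*E, p_2 : T*E × E^∨ → E^∨ are projections), yields a locally free sheaf of rank n on E^∨. -/

import Mathlib

/-!
Put `S = A ⊗[k] R` and `N = S ⊗[A] F`; as an `R`-module `N` is the free module `R ⊗[k] F`, and the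
transform is `P ⊗[A] F ≃ P ⊗[S] N` (`transformEquiv`).

An invertible module is projective, so `P` is a summand of a free `S`-module and `P ⊗[S] N` is a
summand of a direct sum of copies of `N`; hence it is projective over `R` (`projective_tensor`).

For the rank at a maximal ideal `I`, let `K = R ⧸ I` and `G = N ⊗[R] K ≃ K ⊗[k] F`. The fibre of
the transform is `P ⊗[S] G`, and `G` has finite length. Therefore `S` acts on `G` through the
Artinian ring `S ⧸ Ann G`, over which every invertible module is free of rank one, so that
`P ⊗[S] G ≃ G` (`nonempty_tensor_equiv`), which has dimension `dim_k F` over `K`.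

The lemmas are stated for any pushout `S` of `A` and `R` over `k`, so that the actions of `A` and
`R` on `S` play symmetric roles.
-/

open scoped TensorProduct

universe u

/-- If `M` is generated by `g₁, …, gₙ`, then `s ↦ (s g₁, …, s gₙ)` embeds `S ⧸ Ann M` into `Mⁿ`. -/
theorem isArtinianRing_quotient_annihilator (S M : Type*) [CommRing S] [AddCommGroup M] [Module S M]
    [IsArtinian S M] [Module.Finite S M] : IsArtinianRing (S ⧸ Module.annihilator S M) := by
  obtain ⟨n, g, hg⟩ := Module.Finite.exists_fin (R := S) (M := M)
  let f : S →ₗ[S] (Fin n → M) := LinearMap.pi fun i => LinearMap.toSpanSingleton S M (g i)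
  have hf : LinearMap.ker f = Module.annihilator S M := by
    rw [← Submodule.annihilator_top, ← hg]
    ext s
    simp [f, Submodule.mem_annihilator_span, funext_iff]
  have e := (Submodule.quotEquivOfEq _ _ hf).symm.trans f.quotKerEquivRange
  have : IsArtinian S (S ⧸ Module.annihilator S M) := isArtinian_of_linearEquiv e.symm
  exact isArtinian_of_tower S this

/-- Twisting a module of finite length by an invertible module does not change it, because an
invertible module over the Artinian ring `S ⧸ Ann G` is free. -/
theorem nonempty_tensor_equiv (S P G : Type*) [CommRing S] [AddCommGroup P] [Module S P]
    [Module.Invertible S P] [AddCommGroup G] [Module S G] [IsArtinian S G] [Module.Finite S G] :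
    Nonempty (P ⊗[S] G ≃ₗ[S] G) := by
  let T := S ⧸ Module.annihilator S G
  have : IsArtinianRing T := isArtinianRing_quotient_annihilator S G
  let _ : Module T G := Module.quotientAnnihilator
  have : IsScalarTower S T G := Module.IsTorsionBySet.isScalarTower _
  obtain ⟨e⟩ := Module.Invertible.free_iff_linearEquiv.mp
    (inferInstance : Module.Free T (T ⊗[S] P))
  exact ⟨TensorProduct.comm S P G ≪≫ₗ
    ((TensorProduct.AlgebraTensorModule.cancelBaseChange S T T G P).symm ≪≫ₗ
      LinearEquiv.lTensor G e ≪≫ₗ TensorProduct.rid T G).restrictScalars S⟩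

/-- The identification of the transform `P ⊗[A] F` with `P ⊗[S] (S ⊗[A] F)`, linear for the
action of `R` on `P`; `S ⊗[A] F` is the pullback of `F` to the product. -/
noncomputable def transformEquiv
    (A R S : Type*) [CommRing A] [CommRing R] [CommRing S] [Algebra A S] [Algebra R S]
    (F : Type*) [AddCommGroup F] [Module A F]
    (P : Type*) [AddCommGroup P] [Module A P] [Module R P] [SMulCommClass A R P]
    [Module S P] [IsScalarTower A S P] [IsScalarTower R S P] :
    P ⊗[A] F ≃ₗ[R] P ⊗[S] (S ⊗[A] F) :=
  AddEquiv.toLinearEquiv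
    (TensorProduct.AlgebraTensorModule.cancelBaseChange A S S P F).symm.toAddEquiv fun r x => by
      induction x with
      | zero => simp
      | add x y hx hy => simp only [smul_add, map_add, hx, hy]
      | tmul p f => simp [TensorProduct.smul_tmul']

/-- `M` need only be projective over `R`, whereas `P` is projective over the `R`-algebra `S`:
since `P` is an `S`-direct summand of a free module, `P ⊗[S] M` is a summand of a direct sum of
copies of `M`. -/
theorem projective_tensor (R S P M : Type*) [CommRing R] [CommRing S] [Algebra R S]
    [AddCommGroup P] [Module S P] [Module R P] [IsScalarTower R S P] [Module.Projective S P]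
    [AddCommGroup M] [Module S M] [Module R M] [IsScalarTower R S M] [Module.Projective R M] :
    Module.Projective R (P ⊗[S] M) := by
  classical
  obtain ⟨s, hs⟩ := Module.projective_def'.mp (inferInstance : Module.Projective S P)
  have : Module.Projective R (P →₀ M) :=
    .of_equiv (finsuppLEquivDirectSum R M P).symm
  have : Module.Projective R ((P →₀ S) ⊗[S] M) :=
    .of_equiv ((TensorProduct.finsuppScalarLeft S M P).restrictScalars R).symm
  refine .of_split ((s.rTensor M).restrictScalars R)
    (((Finsupp.linearCombination S id).rTensor M).restrictScalars R) ?_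
  ext x
  have := LinearMap.congr_fun (congrArg (LinearMap.rTensor M) hs) x
  simpa [LinearMap.rTensor_comp] using this

theorem projective_transform
    (k A R S : Type*) [Field k] [CommRing A] [CommRing R] [CommRing S] [Algebra k A] [Algebra k R]
    [Algebra k S] [Algebra A S] [Algebra R S] [IsScalarTower k A S] [IsScalarTower k R S]
    [Algebra.IsPushout k R A S]
    (F : Type*) [AddCommGroup F] [Module A F] [Module k F] [IsScalarTower k A F]
    (P : Type*) [AddCommGroup P] [Module A P] [Module R P] [SMulCommClass A R P]
    [Module S P] [IsScalarTower A S P] [IsScalarTower R S P]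
    [Module.Projective S P] :
    Module.Projective R (P ⊗[A] F) := by
  have : Module.Projective R (S ⊗[A] F) :=
    .of_equiv (Algebra.IsPushout.cancelBaseChange k R A S F).symm
  have := projective_tensor R S P (S ⊗[A] F)
  exact .of_equiv (transformEquiv A R S F P).symm

/-- The fibre at `I` is `P ⊗[S] G` with `G = (S ⊗[A] F) ⊗[R] (R ⧸ I)` of finite length over `S`,
so the twist by `P` can be removed. -/
theorem finrank_transform
    (k A R S : Type*) [Field k] [CommRing A] [CommRing R] [CommRing S] [Algebra k A] [Algebra k R]
    [Algebra k S] [Algebra A S] [Algebra R S] [IsScalarTower k A S] [IsScalarTower k R S]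
    [Algebra.IsPushout k R A S]
    (F : Type*) [AddCommGroup F] [Module A F] [Module k F] [IsScalarTower k A F]
    (P : Type*) [AddCommGroup P] [Module A P] [Module R P] [SMulCommClass A R P]
    [Module S P] [IsScalarTower A S P] [IsScalarTower R S P]
    [FiniteDimensional k F] [Module.Invertible S P] (I : Ideal R) [I.IsMaximal] :
    Module.finrank (R ⧸ I) ((R ⧸ I) ⊗[R] (P ⊗[A] F)) = Module.finrank k F := by
  let K := R ⧸ I
  let _ : Field K := Ideal.Quotient.field I
  let M := S ⊗[A] F
  have eG : M ⊗[R] K ≃ₗ[R] K ⊗[k] F :=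
    TensorProduct.comm R M K ≪≫ₗ
    (LinearEquiv.lTensor K (Algebra.IsPushout.cancelBaseChange k R A S F)) ≪≫ₗ
    (TensorProduct.AlgebraTensorModule.cancelBaseChange k R R K F)
  have : Module.Finite R (K ⊗[k] F) := .trans K _
  have : IsArtinian R (K ⊗[k] F) :=
    isArtinian_of_surjective_algebraMap (R := K) Ideal.Quotient.mk_surjective
  have : Module.Finite R (M ⊗[R] K) := .equiv eG.symm
  have : Module.Finite S (M ⊗[R] K) := .of_restrictScalars_finite R S _
  have : IsArtinian S (M ⊗[R] K) := isArtinian_of_tower R (isArtinian_of_linearEquiv eG.symm)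
  obtain ⟨e⟩ := nonempty_tensor_equiv S P (M ⊗[R] K)
  let E : K ⊗[R] (P ⊗[A] F) ≃ₗ[R] K ⊗[k] F :=
    TensorProduct.comm R K (P ⊗[A] F) ≪≫ₗ
    LinearEquiv.rTensor K (transformEquiv A R S F P) ≪≫ₗ
    (TensorProduct.AlgebraTensorModule.assoc R S S P M K ≪≫ₗ e).restrictScalars R ≪≫ₗ eG
  -- `R → K` is surjective, so an `R`-linear map between `K`-modules is `K`-linear.
  have E' : K ⊗[R] (P ⊗[A] F) ≃ₗ[K] K ⊗[k] F :=
    E.extendScalarsOfSurjective Ideal.Quotient.mk_surjective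
  exact E'.finrank_eq.trans (Module.finrank_baseChange ..)

/-- Fourier–Mukai transform of a torsion sheaf, affine-chart model.  Let `F` be a torsion
sheaf of length `n` on `T*E = E × 𝔸¹` (a module over the coordinate ring `A` of a chart of
`T*E` which is `n`-dimensional over `k`), and let `P` be the Poincaré line bundle, i.e. an
invertible module over `A ⊗[k] R`, where `R` is the coordinate ring of a chart of the dual
elliptic curve `E^∨`.  Then the transform `p_{2,*}(p_1^* F ⊗ P) = P ⊗[A] F` is a locally
free `R`-module of rank `n = dim_k F`: it is projective over `R`, and its fibre at every
maximal ideal of `R` has dimension `n`. -/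
theorem fourier_mukai_of_torsion_locally_free
    (k A R : Type u) [Field k] [CommRing A] [CommRing R] [Algebra k A] [Algebra k R]
    (F : Type u) [AddCommGroup F] [Module A F] [Module k F] [IsScalarTower k A F]
    [FiniteDimensional k F]
    (P : Type u) [AddCommGroup P] [Module A P] [Module R P] [SMulCommClass A R P]
    [Module (A ⊗[k] R) P]
    (hPA : ∀ (a : A) (p : P), ((a ⊗ₜ[k] (1 : R) : A ⊗[k] R)) • p = a • p)
    (hPR : ∀ (r' : R) (p : P), (((1 : A) ⊗ₜ[k] r' : A ⊗[k] R)) • p = r' • p)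
    (hinv : ∃ (Q : Type u) (_ : AddCommGroup Q) (_ : Module (A ⊗[k] R) Q),
      Nonempty ((TensorProduct (A ⊗[k] R) P Q) ≃ₗ[A ⊗[k] R] (A ⊗[k] R))) :
    Module.Projective R (P ⊗[A] F) ∧
    ∀ I : Ideal R, I.IsMaximal →
      Module.finrank (R ⧸ I) ((R ⧸ I) ⊗[R] (P ⊗[A] F)) = Module.finrank k F := by
  obtain ⟨Q, _, _, ⟨e⟩⟩ := hinv
  have : Module.Invertible (A ⊗[k] R) P := .left e
  let _ : Algebra R (A ⊗[k] R) := Algebra.TensorProduct.rightAlgebra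
  have : IsScalarTower A (A ⊗[k] R) P := .of_algebraMap_smul hPA
  have : IsScalarTower R (A ⊗[k] R) P := .of_algebraMap_smul hPR
  have : Algebra.IsPushout k R A (A ⊗[k] R) := inferInstance
  exact ⟨projective_transform k A R (A ⊗[k] R) F P,
    fun I _ => finrank_transform k A R (A ⊗[k] R) F P I⟩
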